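/- arXiv:1703.07979 — 2 statements merged into one kernel-verified Lean document; each statement's English description precedes it below -/
import Mathlib

section
/- Let f : ℝ → ℝ admit an entire complex extension F with Taylor coefficients c_j = f^{(j)}(0)/j!, let n ≥ 2 be an integer and 0 < ω < a. Then the series Σ_{k=0}^{∞} binom(-n, k) ω^k ⨍_0^a f(x)/x^{k+n} dx converges absolutely and ∫_0^a f(x)/(ω + x)^n dx = Σ_{k=0}^{∞} binom(-n, k) ω^k ⨍_0^a f(x)/x^{k+n} dx − (F^{(n-1)}(-ω)/(n-1)!) ln ω + Σ_{k=0}^{n-2} F^{(k)}(-ω)/(k! (n-1-k) ω^{n-k-1}), where F^{(k)}(-ω) is the k-th derivative of the entire extension at -ω. -/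
open Filter MeasureTheory Set

/-- The finite part at `0` of `∫_0^a x^s dx`. -/
noncomputable def zpowFinitePart (a : ℝ) (s : ℤ) : ℝ :=
  if s = -1 then Real.log a else a ^ (s + 1) / (s + 1)

theorem integral_zpow_eq_zpowFinitePart_sub {e a : ℝ} (he : 0 < e) (ha : 0 < a) (s : ℤ) :
    ∫ x in e..a, x ^ s = zpowFinitePart a s - zpowFinitePart e s := by
  unfold zpowFinitePart
  split_ifs with h
  · subst h
    simp only [zpow_neg_one]
    rw [integral_inv_of_pos he ha, Real.log_div ha.ne' he.ne']
  · rw [integral_zpow (Or.inr ⟨h, notMem_uIcc_of_lt he ha⟩), sub_div]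

theorem abs_zpowFinitePart_le {a : ℝ} (ha : 0 < a) (s : ℤ) :
    |zpowFinitePart a s| ≤ a ^ (s + 1) * (1 + |Real.log a|) := by
  unfold zpowFinitePart
  split_ifs with h
  · subst h
    simp
  · have h1 : (1 : ℝ) ≤ |(s : ℝ) + 1| := by
      have : 1 ≤ |s + 1| := Int.one_le_abs (by omega)
      exact_mod_cast this
    have h2 : 0 < a ^ (s + 1) := zpow_pos ha _
    rw [abs_div, abs_of_pos h2]
    calc a ^ (s + 1) / |(s : ℝ) + 1| ≤ a ^ (s + 1) := div_le_self h2.le h1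
      _ ≤ a ^ (s + 1) * (1 + |Real.log a|) :=
        le_mul_of_one_le_right h2.le (by linarith [abs_nonneg (Real.log a)])

/-- The value at `-ω` of the `k`-th Taylor coefficient of `z ^ j`. -/
noncomputable def powTaylorCoeff (ω : ℝ) (j k : ℕ) : ℝ :=
  (j.choose k : ℝ) * (-ω) ^ (j - k)

theorem powTaylorCoeff_succ_zero (ω : ℝ) (j : ℕ) :
    powTaylorCoeff ω (j + 1) 0 = -ω * powTaylorCoeff ω j 0 := by
  simp [powTaylorCoeff, pow_succ']

theorem powTaylorCoeff_succ_succ (ω : ℝ) (j k : ℕ) :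
    powTaylorCoeff ω (j + 1) (k + 1) =
      powTaylorCoeff ω j k - ω * powTaylorCoeff ω j (k + 1) := by
  unfold powTaylorCoeff
  rw [Nat.choose_succ_succ, Nat.add_sub_add_right]
  rcases lt_or_ge k j with h | h
  · have : j - k = j - (k + 1) + 1 := by omega
    rw [this, pow_succ]
    push_cast
    ring
  · rw [Nat.choose_eq_zero_of_lt (show j < k + 1 by omega)]
    simp

/-- Minus the finite part at `0` of `∫_0^ω x^{-(i+1)} dx`. -/
noncomputable def negFinitePart (ω : ℝ) (i : ℕ) : ℝ :=
  if i = 0 then -Real.log ω else 1 / (i * ω ^ i)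

/-- The contribution of the pole at `-ω` to `∫_0^a x^j/(ω+x)^n dx`. -/
noncomputable def powPoleTerm (ω : ℝ) (j n : ℕ) : ℝ :=
  ∑ k ∈ Finset.range n, powTaylorCoeff ω j k * negFinitePart ω (n - 1 - k)

theorem powPoleTerm_succ_succ (ω : ℝ) (j n : ℕ) :
    powPoleTerm ω (j + 1) (n + 1) = powPoleTerm ω j n - ω * powPoleTerm ω j (n + 1) := by
  unfold powPoleTerm
  rw [Finset.sum_range_succ', Finset.sum_range_succ' _ n, mul_add, Finset.mul_sum, ← sub_sub,
    ← Finset.sum_sub_distrib, powTaylorCoeff_succ_zero, neg_mul, neg_mul, ← sub_eq_add_neg]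
  congr 1
  · refine Finset.sum_congr rfl fun k _ => ?_
    rw [powTaylorCoeff_succ_succ, show n + 1 - 1 - (k + 1) = n - 1 - k by omega]
    ring
  · ring

theorem powPoleTerm_zero_succ (ω : ℝ) (n : ℕ) :
    powPoleTerm ω 0 (n + 1) = negFinitePart ω n := by
  unfold powPoleTerm
  rw [Finset.sum_range_succ']
  simp [powTaylorCoeff]

/-- The terms of the series of finite parts for `∫_0^a x^j/(ω+x)^n dx`. -/
noncomputable def powSeriesTerm (ω a : ℝ) (j n k : ℕ) : ℝ :=
  (-1) ^ k * (n.multichoose k : ℝ) * ω ^ k * zpowFinitePart a ((j : ℤ) - n - k)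

theorem powSeriesTerm_succ_succ_succ (ω a : ℝ) (j n k : ℕ) :
    powSeriesTerm ω a (j + 1) (n + 1) (k + 1) =
      powSeriesTerm ω a j n (k + 1) - ω * powSeriesTerm ω a j (n + 1) k := by
  unfold powSeriesTerm
  rw [Nat.multichoose_succ_succ]
  push_cast
  rw [show (j : ℤ) + 1 - (n + 1) - (k + 1) = j - n - (k + 1) by ring,
    show (j : ℤ) - (n + 1) - k = j - n - (k + 1) by ring]
  ring

theorem integral_pow_div_add_pow_succ_succ {ω a : ℝ} (hω : 0 < ω) (ha : 0 < a) (j n : ℕ) :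
    ∫ x in (0 : ℝ)..a, x ^ (j + 1) / (ω + x) ^ (n + 1) =
      (∫ x in (0 : ℝ)..a, x ^ j / (ω + x) ^ n) -
        ω * ∫ x in (0 : ℝ)..a, x ^ j / (ω + x) ^ (n + 1) := by
  have hne : ∀ x ∈ uIcc 0 a, ω + x ≠ 0 := by
    intro x hx
    rw [uIcc_of_le ha.le] at hx
    linarith [hx.1]
  have hi : ∀ m : ℕ, IntervalIntegrable (fun x : ℝ => x ^ j / (ω + x) ^ m) volume 0 a := by
    intro m
    apply ContinuousOn.intervalIntegrable
    apply ContinuousOn.div (by fun_prop) (by fun_prop)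
    intro x hx
    exact pow_ne_zero _ (hne x hx)
  rw [← intervalIntegral.integral_const_mul, ← intervalIntegral.integral_sub (hi n)
    ((hi (n + 1)).const_mul ω)]
  refine intervalIntegral.integral_congr fun x hx => ?_
  have := hne x hx
  field_simp
  ring

theorem integral_one_div_add {ω a : ℝ} (hω : 0 < ω) (ha : 0 < a) :
    ∫ x in (0 : ℝ)..a, 1 / (ω + x) = Real.log (ω + a) - Real.log ω := by
  have := intervalIntegral.integral_comp_add_left (fun x : ℝ => 1 / x) ω (a := 0) (b := a)
  rw [this, integral_one_div_of_pos (by linarith) (by linarith),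
    Real.log_div (by linarith) (by linarith), add_zero]

theorem integral_one_div_add_pow {ω a : ℝ} (hω : 0 < ω) (ha : 0 < a) (n : ℕ) :
    ∫ x in (0 : ℝ)..a, 1 / (ω + x) ^ (n + 2) =
      1 / ((n + 1) * ω ^ (n + 1)) - 1 / ((n + 1) * (ω + a) ^ (n + 1)) := by
  have := intervalIntegral.integral_comp_add_left (fun x : ℝ => x ^ (-(n + 2 : ℕ) : ℤ)) ω
    (a := 0) (b := a)
  simp only [zpow_neg, zpow_natCast, ← one_div] at this
  rw [this]
  have h2 := integral_zpow (n := -(n + 2 : ℕ)) (a := ω + 0) (b := ω + a)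
    (Or.inr ⟨by omega, notMem_uIcc_of_lt (by linarith) (by linarith)⟩)
  simp only [zpow_neg, zpow_natCast, ← one_div] at h2
  rw [h2, show (-((n + 2 : ℕ) : ℤ) + 1) = -((n + 1 : ℕ) : ℤ) by push_cast; ring]
  simp only [zpow_neg, zpow_natCast]
  have : (n : ℝ) + 1 ≠ 0 := by positivity
  have h4 : ω + a ≠ 0 := by positivity
  push_cast
  rw [show (-((n : ℝ) + 2) + 1) = -(n + 1) by ring, add_zero]
  field_simp
  ring

theorem hasSum_powSeriesTerm_order_zero (ω a : ℝ) (j : ℕ) :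
    HasSum (powSeriesTerm ω a j 0)
      ((∫ x in (0 : ℝ)..a, x ^ j / (ω + x) ^ 0) - powPoleTerm ω j 0) := by
  have h0 : (∫ x in (0 : ℝ)..a, x ^ j / (ω + x) ^ 0) - powPoleTerm ω j 0 =
      powSeriesTerm ω a j 0 0 := by
    have : ¬ (j : ℤ) = -1 := by omega
    simp [powPoleTerm, powSeriesTerm, zpowFinitePart, this]
    norm_cast
  rw [h0]
  refine hasSum_single 0 fun k hk => ?_
  obtain ⟨k, rfl⟩ := Nat.exists_eq_succ_of_ne_zero hk
  simp [powSeriesTerm]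

theorem hasSum_powSeriesTerm_zero_one {ω a : ℝ} (hω : 0 < ω) (ha : ω < a) :
    HasSum (powSeriesTerm ω a 0 1)
      ((∫ x in (0 : ℝ)..a, x ^ 0 / (ω + x) ^ 1) - powPoleTerm ω 0 1) := by
  have ha0 : 0 < a := hω.trans ha
  simp only [pow_zero, pow_one]
  rw [integral_one_div_add hω ha0, powPoleTerm_zero_succ]
  rw [← hasSum_nat_add_iff' 1]
  have h := (Real.hasSum_pow_div_log_of_abs_lt_one (x := -(ω / a))
    (by rw [abs_neg, abs_of_pos (by positivity)]; exact (div_lt_one ha0).2 ha)).neg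
  have hlog : Real.log (1 - -(ω / a)) = Real.log (ω + a) - Real.log a := by
    rw [← Real.log_div (by positivity) (by positivity)]
    congr 1
    field_simp
    ring
  rw [hlog] at h
  convert h using 1
  · ext k
    have hk : ¬ (-1 - ((k : ℤ) + 1) = -1) := by omega
    simp only [powSeriesTerm, zpowFinitePart, Nat.multichoose_one]
    push_cast
    rw [if_neg hk, show (-1 - ((k : ℤ) + 1) + 1) = -((k + 1 : ℕ) : ℤ) by push_cast; ring,
      zpow_neg, zpow_natCast, neg_pow (ω / a), div_pow]
    have : (k : ℝ) + 1 ≠ 0 := by positivity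
    rw [show ((-1 : ℝ) - (k + 1) + 1) = -(k + 1) by ring]
    field_simp
  · simp [powSeriesTerm, zpowFinitePart, negFinitePart]

theorem hasSum_powSeriesTerm_zero_add_two {ω a : ℝ} (hω : 0 < ω) (ha : ω < a) (n : ℕ) :
    HasSum (powSeriesTerm ω a 0 (n + 2))
      ((∫ x in (0 : ℝ)..a, x ^ 0 / (ω + x) ^ (n + 2)) - powPoleTerm ω 0 (n + 2)) := by
  have ha0 : 0 < a := hω.trans ha
  simp only [pow_zero]
  rw [integral_one_div_add_pow hω ha0, powPoleTerm_zero_succ]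
  have h := (hasSum_choose_mul_geometric_of_norm_lt_one n (r := -(ω / a))
    (by rw [norm_neg, Real.norm_of_nonneg (by positivity)]; exact (div_lt_one ha0).2 ha)).mul_left
      (-(1 / ((n + 1) * a ^ (n + 1))))
  have hterm : powSeriesTerm ω a 0 (n + 2) = fun k =>
      -(1 / ((n + 1) * a ^ (n + 1))) * (((k + n).choose n : ℝ) * (-(ω / a)) ^ k) := by
    ext k
    have hk : ¬ (0 - ((n : ℤ) + 2) - k = -1) := by omega
    simp only [powSeriesTerm, zpowFinitePart, Nat.multichoose_eq]
    push_cast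
    rw [if_neg hk, show (0 - ((n : ℤ) + 2) - k + 1) = -((n + 1 + k : ℕ) : ℤ) by push_cast; ring,
      zpow_neg, zpow_natCast, neg_pow (ω / a), div_pow]
    have hc : ((n + 2 + k - 1).choose k : ℝ) * (n + 1) = (n + 1 + k) * ((k + n).choose n : ℝ) := by
      rw [show n + 2 + k - 1 = (n + k) + 1 by omega]
      have := Nat.choose_mul_succ_eq (n + k) k
      rw [show n + k + 1 - k = n + 1 by omega] at this
      rw [add_comm k n, Nat.choose_symm_add (a := n)]
      have h' : ((n + k).choose k : ℝ) * (n + k + 1) = (n + k + 1).choose k * (n + 1) := by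
        exact_mod_cast this
      linarith
    have h1 : (n : ℝ) + 1 ≠ 0 := by positivity
    have h2 : (n : ℝ) + 1 + k ≠ 0 := by positivity
    rw [show ((0 : ℝ) - (n + 2) - k + 1) = -(n + 1 + k) by ring]
    rw [show ((k + n).choose n : ℝ) = (n + 2 + k - 1).choose k * (n + 1) / (n + 1 + k) by
      rw [hc]; field_simp]
    field_simp
    ring
  have hsum : 1 / ((n + 1) * ω ^ (n + 1)) - 1 / ((n + 1) * (ω + a) ^ (n + 1)) -
      negFinitePart ω (n + 1) =
        -(1 / ((n + 1) * a ^ (n + 1))) * (1 / (1 - -(ω / a)) ^ (n + 1)) := by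
    have h1 : (n : ℝ) + 1 ≠ 0 := by positivity
    simp [negFinitePart]
    rw [show 1 + ω / a = (ω + a) / a by field_simp; ring, div_pow]
    field_simp
  rw [hterm, hsum]
  exact h

theorem hasSum_powSeriesTerm {ω a : ℝ} (hω : 0 < ω) (ha : ω < a) (j : ℕ) : ∀ n : ℕ,
    HasSum (powSeriesTerm ω a j n)
      ((∫ x in (0 : ℝ)..a, x ^ j / (ω + x) ^ n) - powPoleTerm ω j n) := by
  have ha0 : 0 < a := hω.trans ha
  induction j with
  | zero =>
    intro n
    match n with
    | 0 => exact hasSum_powSeriesTerm_order_zero ω a 0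
    | 1 => exact hasSum_powSeriesTerm_zero_one hω ha
    | n + 2 => exact hasSum_powSeriesTerm_zero_add_two hω ha n
  | succ j ih =>
    intro n
    match n with
    | 0 => exact hasSum_powSeriesTerm_order_zero ω a (j + 1)
    | n + 1 =>
      have h1 := (hasSum_nat_add_iff' 1).2 (ih n)
      have h2 := h1.sub ((ih (n + 1)).mul_left ω)
      rw [← hasSum_nat_add_iff' 1]
      convert h2 using 1
      · ext k
        exact powSeriesTerm_succ_succ_succ ω a j n k
      · rw [integral_pow_div_add_pow_succ_succ hω ha0, powPoleTerm_succ_succ]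
        simp [powSeriesTerm]
        ring

theorem hasSum_mul_integral_pow_mul {c : ℕ → ℝ} {f w : ℝ → ℝ} {e a : ℝ} (he : 0 ≤ e)
    (hea : e ≤ a) (hs : Summable fun j => |c j| * a ^ j)
    (hf : ∀ x, HasSum (fun j => c j * x ^ j) (f x)) (hw : ContinuousOn w (Icc e a)) :
    HasSum (fun j => c j * ∫ x in e..a, x ^ j * w x) (∫ x in e..a, f x * w x) := by
  obtain ⟨M, hM⟩ := isCompact_Icc.exists_bound_of_continuousOn hw
  have hsub : uIoc e a ⊆ Icc e a := by
    rw [uIoc_of_le hea]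
    exact Ioc_subset_Icc_self
  simp only [← intervalIntegral.integral_const_mul]
  refine intervalIntegral.hasSum_integral_of_dominated_convergence
    (fun j _ => |c j| * a ^ j * M) (fun j => ?_) (fun j => ?_) ?_ ?_ ?_
  · have : ContinuousOn (fun x => c j * (x ^ j * w x)) (Icc e a) := by fun_prop
    exact (this.mono hsub).aestronglyMeasurable measurableSet_uIoc
  · refine Eventually.of_forall fun x hx => ?_
    have hx' := hsub hx
    have hx0 : 0 ≤ x := he.trans hx'.1
    rw [norm_mul, norm_mul, Real.norm_eq_abs (c j), norm_pow, Real.norm_of_nonneg hx0, ← mul_assoc]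
    have := hM x hx'
    have hxa := hx'.2
    have ha : 0 ≤ a := he.trans hea
    gcongr
  · exact Eventually.of_forall fun _ _ => hs.mul_right M
  · exact intervalIntegrable_const
  · refine Eventually.of_forall fun x _ => ?_
    simpa only [mul_assoc] using (hf x).mul_right (w x)

theorem tendsto_integral_sub_finitePart {c : ℕ → ℝ} {f : ℝ → ℝ} {a : ℝ} (ha : 0 < a)
    (hs : Summable fun j => |c j| * a ^ j)
    (hf : ∀ x, HasSum (fun j => c j * x ^ j) (f x)) (m : ℕ)
    (hfp : Summable fun j : ℕ => c j * zpowFinitePart a ((j : ℤ) - (m + 1 : ℕ))) :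
    Tendsto
      (fun ε : ℝ =>
        (∫ x in ε..a, f x / x ^ (m + 1)) -
          ((∑ j ∈ Finset.range m, c j / (((m - j : ℕ) : ℝ) * ε ^ (m - j))) - c m * Real.log ε))
      (nhdsWithin 0 (Set.Ioi 0))
      (nhds (∑' j : ℕ, c j * zpowFinitePart a ((j : ℤ) - (m + 1 : ℕ)))) := by
  set S := ∑' j : ℕ, c j * zpowFinitePart a ((j : ℤ) - (m + 1 : ℕ))
  have hs' : Summable fun i => |c (i + (m + 1))| * a ^ i := by
    have := ((summable_nat_add_iff (m + 1)).2 hs).mul_right (a ^ (m + 1))⁻¹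
    refine this.congr fun i => ?_
    rw [pow_add]
    field_simp
  set M := ∑' i, |c (i + (m + 1))| * a ^ i
  have key : ∀ ε ∈ Ioo 0 a, |((∫ x in ε..a, f x / x ^ (m + 1)) -
      ((∑ j ∈ Finset.range m, c j / (((m - j : ℕ) : ℝ) * ε ^ (m - j))) - c m * Real.log ε)) - S|
      ≤ ε * M := by
    intro ε ⟨hε, hεa⟩
    have h1 := hasSum_mul_integral_pow_mul (w := fun x => (x ^ (m + 1))⁻¹) hε.le hεa.le hs hf
      (ContinuousOn.inv₀ (by fun_prop) fun x hx => pow_ne_zero _ (hε.trans_le hx.1).ne')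
    have h2 : ∀ j : ℕ, ∫ x in ε..a, x ^ j * (x ^ (m + 1))⁻¹ =
        zpowFinitePart a ((j : ℤ) - (m + 1 : ℕ)) - zpowFinitePart ε ((j : ℤ) - (m + 1 : ℕ)) := by
      intro j
      rw [← integral_zpow_eq_zpowFinitePart_sub hε ha]
      refine intervalIntegral.integral_congr fun x hx => ?_
      rw [uIcc_of_le hεa.le] at hx
      have : x ≠ 0 := (hε.trans_le hx.1).ne'
      simp only [zpow_sub₀ this, zpow_natCast, div_eq_mul_inv]
    simp only [h2, mul_sub] at h1
    simp only [← div_eq_mul_inv] at h1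
    have h3 : HasSum (fun j : ℕ => c j * zpowFinitePart ε ((j : ℤ) - (m + 1 : ℕ)))
        (S - ∫ x in ε..a, f x / x ^ (m + 1)) := by
      refine (hfp.hasSum.sub h1).congr_fun fun j => ?_
      ring
    have h4 := (hasSum_nat_add_iff' (m + 1)).2 h3
    have h5 : ∑ j ∈ Finset.range (m + 1), c j * zpowFinitePart ε ((j : ℤ) - (m + 1 : ℕ)) =
        -((∑ j ∈ Finset.range m, c j / (((m - j : ℕ) : ℝ) * ε ^ (m - j))) - c m * Real.log ε) := by
      rw [Finset.sum_range_succ, add_comm, neg_sub, sub_eq_add_neg (c m * _),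
        ← Finset.sum_neg_distrib]
      congr 1
      · simp [zpowFinitePart]
      · refine Finset.sum_congr rfl fun j hj => ?_
        have hj := Finset.mem_range.1 hj
        obtain ⟨d, rfl⟩ := Nat.exists_eq_add_of_lt hj
        rw [zpowFinitePart, if_neg (by omega),
          show ((j : ℤ) - (j + d + 1 + 1 : ℕ) + 1) = -((d + 1 : ℕ) : ℤ) by push_cast; ring,
          show j + d + 1 - j = d + 1 by omega, zpow_neg, zpow_natCast]
        push_cast
        rw [show ((j : ℝ) - (j + d + 1 + 1) + 1) = -(d + 1) by ring]
        have : (d : ℝ) + 1 ≠ 0 := by positivity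
        field_simp
    have h6 : ∀ i : ℕ, ‖c (i + (m + 1)) * zpowFinitePart ε (((i + (m + 1) : ℕ) : ℤ) - (m + 1 : ℕ))‖
        ≤ ε * (|c (i + (m + 1))| * a ^ i) := by
      intro i
      rw [zpowFinitePart, if_neg (by push_cast; omega),
        show (((i + (m + 1) : ℕ) : ℤ) - (m + 1 : ℕ) + 1) = ((i + 1 : ℕ) : ℤ) by push_cast; ring,
        zpow_natCast]
      push_cast
      rw [show ((i : ℝ) + (m + 1) - (m + 1) + 1) = i + 1 by ring, norm_mul, Real.norm_eq_abs,
        Real.norm_of_nonneg (by positivity)]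
      have : ε ^ (i + 1) / ((i : ℝ) + 1) ≤ ε * a ^ i := by
        calc ε ^ (i + 1) / ((i : ℝ) + 1) ≤ ε ^ (i + 1) :=
              div_le_self (by positivity) (by linarith [(Nat.cast_nonneg i : (0 : ℝ) ≤ i)])
          _ = ε * ε ^ i := pow_succ' _ _
          _ ≤ ε * a ^ i := by gcongr
      calc _ ≤ |c (i + (m + 1))| * (ε * a ^ i) := by gcongr
        _ = _ := by ring
    have h7 := tsum_of_norm_bounded (hs'.hasSum.mul_left ε) h6
    rw [h4.tsum_eq, h5, Real.norm_eq_abs, ← abs_neg] at h7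
    convert h7 using 2
    ring
  rw [tendsto_iff_norm_sub_tendsto_zero]
  refine squeeze_zero' (g := fun ε => ε * M) (Eventually.of_forall fun _ => norm_nonneg _) ?_ ?_
  · filter_upwards [Ioo_mem_nhdsGT ha] with ε hε using key ε hε
  · have : Tendsto (fun ε : ℝ => ε * M) (nhds 0) (nhds (0 * M)) :=
      tendsto_id.mul_const M
    rw [zero_mul] at this
    exact this.mono_left nhdsWithin_le_nhds

theorem hasSum_mul_powTaylorCoeff {F : ℂ → ℂ} (hF : Differentiable ℂ F) {c : ℕ → ℝ}
    (hc : ∀ j, (c j : ℂ) = iteratedDeriv j F 0 / (Nat.factorial j)) (ω : ℝ) (k : ℕ) :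
    HasSum (fun j => ((c j * powTaylorCoeff ω j k : ℝ) : ℂ))
      (iteratedDeriv k F (-(ω : ℂ)) / (Nat.factorial k : ℂ)) := by
  have hd : Differentiable ℂ (iteratedDeriv k F) :=
    (hF.contDiff (n := ⊤)).differentiable_iteratedDeriv k (by exact_mod_cast WithTop.coe_lt_top _)
  have h := (Complex.hasSum_taylorSeries_of_entire hd 0 (-(ω : ℂ))).div_const
    (Nat.factorial k : ℂ)
  rw [← hasSum_nat_add_iff' k]
  have h0 : ∑ j ∈ Finset.range k, ((c j * powTaylorCoeff ω j k : ℝ) : ℂ) = 0 := by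
    refine Finset.sum_eq_zero fun j hj => ?_
    simp [powTaylorCoeff, Nat.choose_eq_zero_of_lt (Finset.mem_range.1 hj)]
  rw [h0, sub_zero]
  refine HasSum.congr_fun h fun i => ?_
  have h1 : iteratedDeriv i (iteratedDeriv k F) 0 = iteratedDeriv (i + k) F 0 := by
    simp only [iteratedDeriv_eq_iterate, Function.iterate_add_apply]
  have h2 : ((i + k).choose k : ℂ) * i.factorial * k.factorial = (i + k).factorial := by
    have := Nat.add_choose_mul_factorial_mul_factorial i k
    exact_mod_cast this
  have h3 : iteratedDeriv (i + k) F 0 = c (i + k) * (i + k).factorial := by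
    rw [hc, div_mul_cancel₀ _ (Nat.cast_ne_zero.2 (Nat.factorial_ne_zero _))]
  have h4 : (k.factorial : ℂ) ≠ 0 := by exact_mod_cast Nat.factorial_ne_zero _
  have h5 : (i.factorial : ℂ) ≠ 0 := by exact_mod_cast Nat.factorial_ne_zero _
  rw [h1, h3, ← h2]
  simp only [powTaylorCoeff, sub_zero, smul_eq_mul, Nat.add_sub_cancel]
  push_cast
  field_simp

theorem hasSum_mul_powPoleTerm {F : ℂ → ℂ} (hF : Differentiable ℂ F) {c : ℕ → ℝ}
    (hc : ∀ j, (c j : ℂ) = iteratedDeriv j F 0 / (Nat.factorial j)) (ω : ℝ) (n : ℕ) :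
    HasSum (fun j => ((c j * powPoleTerm ω j n : ℝ) : ℂ))
      (∑ k ∈ Finset.range n, iteratedDeriv k F (-(ω : ℂ)) / (Nat.factorial k : ℂ) *
        (negFinitePart ω (n - 1 - k) : ℂ)) := by
  have h := hasSum_sum (s := Finset.range n) fun k _ =>
    (hasSum_mul_powTaylorCoeff hF hc ω k).mul_right (negFinitePart ω (n - 1 - k) : ℂ)
  refine HasSum.congr_fun h fun j => ?_
  simp only [powPoleTerm, Finset.mul_sum]
  push_cast
  exact Finset.sum_congr rfl fun k _ => by ring

theorem abs_zpowFinitePart_sub_sub_le {a : ℝ} (ha : 0 < a) (j n k : ℕ) :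
    |zpowFinitePart a ((j : ℤ) - n - k)| ≤
      a ^ j * ((a ^ k)⁻¹ * (a / a ^ n * (1 + |Real.log a|))) := by
  refine (abs_zpowFinitePart_le ha _).trans_eq ?_
  rw [show (j : ℤ) - n - k + 1 = j + 1 - n - k by ring, zpow_sub₀ ha.ne', zpow_sub₀ ha.ne',
    zpow_add₀ ha.ne', zpow_natCast, zpow_natCast, zpow_natCast, zpow_one]
  field_simp

theorem summable_mul_zpowFinitePart {c : ℕ → ℝ} {a : ℝ} (ha : 0 < a)
    (hs : Summable fun j => |c j| * a ^ j) (n k : ℕ) :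
    Summable fun j : ℕ => c j * zpowFinitePart a ((j : ℤ) - n - k) := by
  refine Summable.of_norm_bounded (hs.mul_right ((a ^ k)⁻¹ * (a / a ^ n * (1 + |Real.log a|))))
    fun j => ?_
  rw [norm_mul, Real.norm_eq_abs, Real.norm_eq_abs, mul_assoc]
  exact mul_le_mul_of_nonneg_left (abs_zpowFinitePart_sub_sub_le ha j n k) (abs_nonneg _)

theorem summable_mul_powSeriesTerm {c : ℕ → ℝ} {ω a : ℝ} (hω : 0 < ω) (ha : ω < a)
    (hs : Summable fun j => |c j| * a ^ j) (n : ℕ) :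
    Summable fun p : ℕ × ℕ => c p.1 * powSeriesTerm ω a p.1 (n + 1) p.2 := by
  have ha0 : 0 < a := hω.trans ha
  have hg : Summable fun k : ℕ => ((k + n).choose n : ℝ) * (ω / a) ^ k :=
    summable_choose_mul_geometric_of_norm_lt_one n
      (by rw [Real.norm_of_nonneg (by positivity)]; exact (div_lt_one ha0).2 ha)
  have hp := hs.mul_of_nonneg (hg.mul_right (a / a ^ (n + 1) * (1 + |Real.log a|)))
    (fun j => by positivity) (fun k => by positivity)
  refine Summable.of_norm_bounded hp fun p => ?_
  obtain ⟨j, k⟩ := p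
  have hmc : (((n + 1).multichoose k : ℕ) : ℝ) = (k + n).choose n := by
    rw [Nat.multichoose_eq, show n + 1 + k - 1 = n + k by omega, add_comm k n, Nat.choose_symm_add]
  simp only [powSeriesTerm, hmc]
  rw [norm_mul, norm_mul, norm_mul, norm_mul, norm_pow, norm_neg, norm_one, one_pow, one_mul,
    norm_pow, Real.norm_of_nonneg hω.le, Real.norm_of_nonneg (Nat.cast_nonneg _),
    Real.norm_eq_abs, Real.norm_eq_abs, div_pow]
  calc _ ≤ |c j| * (((k + n).choose n : ℝ) * ω ^ k *
        (a ^ j * ((a ^ k)⁻¹ * (a / a ^ (n + 1) * (1 + |Real.log a|))))) := by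
        gcongr
        exact abs_zpowFinitePart_sub_sub_le ha0 j (n + 1) k
    _ = _ := by ring

theorem hasSum_real_taylorSeries {f : ℝ → ℝ} {F : ℂ → ℂ} (hF : Differentiable ℂ F)
    (hFf : ∀ x : ℝ, F x = f x) {c : ℕ → ℝ}
    (hc : ∀ j, (c j : ℂ) = iteratedDeriv j F 0 / (Nat.factorial j)) (x : ℝ) :
    HasSum (fun j => c j * x ^ j) (f x) := by
  rw [← Complex.hasSum_ofReal, ← hFf]
  refine HasSum.congr_fun ((Complex.hasSum_taylorSeries_of_entire hF 0 x)) fun j => ?_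
  push_cast
  rw [hc, sub_zero, smul_eq_mul, smul_eq_mul]
  ring

/-- Finite-part integration of the incomplete generalized Stieltjes transform of
order `n ≥ 2`: `∫_0^a f(x)/(ω+x)^n dx = Σ_k binom(-n,k) ω^k ⨍_0^a f/x^{k+n}
− (F^{(n-1)}(-ω)/(n-1)!) ln ω + Σ_{k=0}^{n-2} F^{(k)}(-ω)/(k!(n-1-k)ω^{n-k-1})`,
the series converging absolutely. -/
theorem stmt_10 (f : ℝ → ℝ) (F : ℂ → ℂ) (c : ℕ → ℝ)
    (hF : Differentiable ℂ F) (hFf : ∀ x : ℝ, F x = f x)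
    (hc : ∀ j, (c j : ℂ) = iteratedDeriv j F 0 / (Nat.factorial j))
    (n : ℕ) (hn : 2 ≤ n) (ω a : ℝ) (hω : 0 < ω) (ha : ω < a) :
    ∃ fp : ℕ → ℝ,
      (∀ k : ℕ,
        Tendsto
          (fun ε : ℝ =>
            (∫ x in ε..a, f x / x ^ (k + n)) -
              ((∑ j ∈ Finset.range (k + n - 1),
                  c j / (((k + n - 1 - j : ℕ) : ℝ) * ε ^ (k + n - 1 - j))) -
                c (k + n - 1) * Real.log ε))
          (nhdsWithin 0 (Set.Ioi 0)) (nhds (fp k))) ∧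
      Summable (fun k : ℕ =>
        |(-1 : ℝ) ^ k * (Nat.choose (n + k - 1) k : ℝ) * ω ^ k * fp k|) ∧
      ((∫ x in (0 : ℝ)..a, f x / (ω + x) ^ n : ℝ) : ℂ) =
        ((∑' k : ℕ, (-1 : ℝ) ^ k * (Nat.choose (n + k - 1) k : ℝ) * ω ^ k * fp k : ℝ) : ℂ) -
          (iteratedDeriv (n - 1) F (-(ω : ℂ)) / (Nat.factorial (n - 1) : ℂ)) *
            (Real.log ω : ℂ) +
          ∑ k ∈ Finset.range (n - 1),
            iteratedDeriv k F (-(ω : ℂ)) /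
              ((Nat.factorial k : ℂ) * ((n - 1 - k : ℕ) : ℂ) * (ω : ℂ) ^ (n - k - 1)) := by
  obtain ⟨N, rfl⟩ := Nat.exists_eq_succ_of_ne_zero (show n ≠ 0 by omega)
  simp only [Nat.succ_eq_add_one] at *
  have ha0 : 0 < a := hω.trans ha
  have hf := hasSum_real_taylorSeries hF hFf hc
  have hs : Summable fun j => |c j| * a ^ j := by
    refine (hf a).summable.abs.congr fun j => ?_
    rw [abs_mul, abs_of_pos (pow_pos ha0 j)]
  have hfp := summable_mul_zpowFinitePart ha0 hs (N + 1)
  have hT := (summable_mul_powSeriesTerm hω ha hs N).hasSum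
  set A := ∑' p : ℕ × ℕ, c p.1 * powSeriesTerm ω a p.1 (N + 1) p.2
  have hrow : HasSum (fun j => c j * ((∫ x in (0 : ℝ)..a, x ^ j / (ω + x) ^ (N + 1)) -
      powPoleTerm ω j (N + 1))) A :=
    hT.prod_fiberwise fun j => (hasSum_powSeriesTerm hω ha j (N + 1)).mul_left (c j)
  have hcol : HasSum (fun k : ℕ => (-1 : ℝ) ^ k * ((N + 1 + k - 1).choose k : ℝ) * ω ^ k *
      ∑' j : ℕ, c j * zpowFinitePart a ((j : ℤ) - (N + 1 : ℕ) - k)) A := by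
    refine HasSum.prod_fiberwise ((Equiv.prodComm ℕ ℕ).hasSum_iff.2 hT) fun k => ?_
    refine HasSum.congr_fun (((hfp k).hasSum.mul_left _)) fun j => ?_
    simp only [Function.comp_apply, Equiv.prodComm_apply, Prod.swap_prod_mk, powSeriesTerm,
      Nat.multichoose_eq]
    ring
  have hint := hasSum_mul_integral_pow_mul (w := fun x => ((ω + x) ^ (N + 1))⁻¹) le_rfl ha0.le hs hf
    (ContinuousOn.inv₀ (by fun_prop) fun x hx => pow_ne_zero _ (by linarith [hx.1]))
  simp only [← div_eq_mul_inv] at hint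
  have hpole := hasSum_mul_powPoleTerm hF hc ω (N + 1)
  refine ⟨fun k => ∑' j : ℕ, c j * zpowFinitePart a ((j : ℤ) - (N + 1 : ℕ) - k), fun k => ?_,
    hcol.summable.abs, ?_⟩
  · have hcast : ∀ j : ℕ, (j : ℤ) - (N + 1 : ℕ) - k = j - (k + N + 1 : ℕ) := by
      intro j
      push_cast
      ring
    have hk := hfp k
    simp only [hcast] at hk ⊢
    exact tendsto_integral_sub_finitePart ha0 hs hf (k + N) hk
  · have hA : (A : ℂ) = ((∫ x in (0 : ℝ)..a, f x / (ω + x) ^ (N + 1) : ℝ) : ℂ) -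
        ∑ k ∈ Finset.range (N + 1), iteratedDeriv k F (-(ω : ℂ)) / (Nat.factorial k : ℂ) *
          (negFinitePart ω (N + 1 - 1 - k) : ℂ) := by
      refine (Complex.hasSum_ofReal.2 hrow).unique ?_
      refine HasSum.congr_fun (((Complex.hasSum_ofReal.2 hint).sub hpole)) fun j => ?_
      push_cast
      ring
    rw [hcol.tsum_eq, hA, Finset.sum_range_succ]
    have hterm : ∀ k ∈ Finset.range N, iteratedDeriv k F (-(ω : ℂ)) / (Nat.factorial k : ℂ) *
        (negFinitePart ω (N + 1 - 1 - k) : ℂ) = iteratedDeriv k F (-(ω : ℂ)) /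
          ((Nat.factorial k : ℂ) * ((N + 1 - 1 - k : ℕ) : ℂ) * (ω : ℂ) ^ (N + 1 - k - 1)) := by
      intro k hk
      have hk := Finset.mem_range.1 hk
      rw [show N + 1 - k - 1 = N + 1 - 1 - k by omega, negFinitePart, if_neg (by omega)]
      push_cast
      rw [div_mul_div_comm, mul_one, mul_assoc]
    rw [Finset.sum_congr rfl hterm]
    simp [negFinitePart]
    ring
end

section
/- Let F : ℂ → ℂ be entire with F real-valued on the real axis, let f be its restriction to ℝ with Taylor coefficients c_j = F^{(j)}(0)/j!, and let 0 < ω < a. Then ∫_0^a f(x)/(ω² + x²) dx = Σ_{k=0}^{∞} (-1)^k ω^{2k} ⨍_0^a f(x)/x^{2k+2} dx + (π/(2ω)) Re F(iω) − (ln ω/ω) Im F(iω), where the infinite series converges. -/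
open Filter MeasureTheory Set

/-- The primitive of `x ^ j / x ^ (n + 1)` on `(0, ∞)` without constant term: its value at `a` is the
finite part of `∫ x in 0..a, x ^ j / x ^ (n + 1)`. -/
noncomputable def monomialPrimitive (n j : ℕ) (x : ℝ) : ℝ :=
  if j = n then Real.log x else x ^ ((j : ℤ) - n) / ((j : ℝ) - n)

theorem hasDerivAt_monomialPrimitive (n j : ℕ) {x : ℝ} (hx : 0 < x) :
    HasDerivAt (monomialPrimitive n j) (x ^ j / x ^ (n + 1)) x := by
  unfold monomialPrimitive
  split_ifs with h
  · subst h
    refine (Real.hasDerivAt_log hx.ne').congr_deriv ?_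
    field_simp
    ring
  · have hne : (j : ℝ) - n ≠ 0 := sub_ne_zero.mpr (by exact_mod_cast h)
    refine ((hasDerivAt_zpow ((j : ℤ) - n) x (Or.inl hx.ne')).div_const ((j : ℝ) - n)).congr_deriv ?_
    rw [sub_sub, zpow_sub₀ hx.ne']
    push_cast
    rw [mul_div_cancel_left₀ _ hne]
    norm_cast

theorem abs_monomialPrimitive_le (n j : ℕ) {x : ℝ} (hx : 0 < x) :
    |monomialPrimitive n j x| ≤ (1 + |Real.log x|) * (x ^ j / x ^ n) := by
  unfold monomialPrimitive
  split_ifs with h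
  · subst h
    rw [div_self (by positivity)]
    linarith
  · have hone : (1 : ℝ) ≤ |(j : ℝ) - n| := by
      have : (1 : ℤ) ≤ |(j : ℤ) - n| := Int.one_le_abs (by omega)
      exact_mod_cast this
    rw [zpow_sub₀ hx.ne', zpow_natCast, zpow_natCast, abs_div,
      abs_of_pos (show 0 < x ^ j / x ^ n by positivity)]
    calc x ^ j / x ^ n / |(j : ℝ) - n| ≤ x ^ j / x ^ n := div_le_self (by positivity) hone
      _ ≤ _ := le_mul_of_one_le_left (by positivity) (by linarith [abs_nonneg (Real.log x)])

theorem integral_pow_div_pow (n j : ℕ) {ε a : ℝ} (hε : 0 < ε) (ha : ε ≤ a) :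
    ∫ x in ε..a, x ^ j / x ^ (n + 1) = monomialPrimitive n j a - monomialPrimitive n j ε := by
  have hpos : ∀ x ∈ uIcc ε a, 0 < x := fun x hx => by
    rw [uIcc_of_le ha] at hx
    exact hε.trans_le hx.1
  refine intervalIntegral.integral_eq_sub_of_hasDerivAt
    (fun x hx => hasDerivAt_monomialPrimitive n j (hpos x hx)) (ContinuousOn.intervalIntegrable ?_)
  exact ContinuousOn.div (by fun_prop) (by fun_prop) fun x hx => (pow_pos (hpos x hx) _).ne'

theorem sum_mul_monomialPrimitive (c : ℕ → ℝ) (n : ℕ) {ε : ℝ} (hε : 0 < ε) :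
    ∑ j ∈ Finset.range (n + 1), c j * monomialPrimitive n j ε =
      -((∑ j ∈ Finset.range n, c j / (((n - j : ℕ) : ℝ) * ε ^ (n - j))) - c n * Real.log ε) := by
  rw [Finset.sum_range_succ, neg_sub, sub_eq_neg_add, ← Finset.sum_neg_distrib]
  congr 1
  · refine Finset.sum_congr rfl fun j hj => ?_
    have hjn : j < n := Finset.mem_range.mp hj
    have hcast : ((n - j : ℕ) : ℝ) = n - j := by push_cast [hjn.le]; ring
    have hne : (n : ℝ) - j ≠ 0 := sub_ne_zero.mpr (by exact_mod_cast hjn.ne')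
    have hne' : (j : ℝ) - n ≠ 0 := sub_ne_zero.mpr (by exact_mod_cast hjn.ne)
    have hexp : (j : ℤ) - n = -((n - j : ℕ) : ℤ) := by omega
    rw [monomialPrimitive, if_neg hjn.ne, hexp, zpow_neg, zpow_natCast, hcast]
    rw [← neg_sub (n : ℝ) j]
    field_simp
  · simp [monomialPrimitive]

/-- Termwise integration of a power series against a continuous weight. -/
theorem hasSum_integral_powerSeries_mul {c : ℕ → ℝ} {f w : ℝ → ℝ} {a : ℝ} (ha : 0 ≤ a)
    (hf : ∀ x, HasSum (fun j => c j * x ^ j) (f x)) (hw : Continuous w) :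
    HasSum (fun j => c j * ∫ x in 0..a, x ^ j * w x) (∫ x in 0..a, f x * w x) := by
  simp_rw [← intervalIntegral.integral_const_mul]
  have hs : Summable fun j => |c j * a ^ j| := (hf a).summable.abs
  refine intervalIntegral.hasSum_integral_of_dominated_convergence
    (fun j x => |c j * a ^ j| * |w x|) (fun j => ?_) (fun j => ?_) ?_ ?_ ?_
  · exact Continuous.aestronglyMeasurable (by fun_prop)
  · refine Eventually.of_forall fun x hx => ?_
    rw [uIoc_of_le ha] at hx
    rw [Real.norm_eq_abs, ← mul_assoc, abs_mul, abs_mul (c j), abs_mul (c j), abs_pow, abs_pow,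
      abs_of_pos hx.1, abs_of_nonneg ha]
    have := pow_le_pow_left₀ hx.1.le hx.2 j
    gcongr
  · exact Eventually.of_forall fun x _ => hs.mul_right _
  · simp_rw [tsum_mul_right]
    exact Continuous.intervalIntegrable (by fun_prop) _ _
  · refine Eventually.of_forall fun x _ => ?_
    simpa only [mul_assoc] using (hf x).mul_right (w x)

theorem hasSum_powerSeries_tail {c : ℕ → ℝ} {f : ℝ → ℝ}
    (hf : ∀ x, HasSum (fun j => c j * x ^ j) (f x)) (n : ℕ) (x : ℝ) :
    HasSum (fun j => c (j + n) * x ^ j) (∑' j, c (j + n) * x ^ j) := by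
  refine Summable.hasSum ?_
  rcases eq_or_ne x 0 with rfl | hx
  · exact summable_of_ne_finset_zero (s := {0}) fun j hj => by
      simp [zero_pow (Finset.notMem_singleton.mp hj)]
  · have h := ((summable_nat_add_iff n).mpr (hf x).summable).mul_right (x ^ n)⁻¹
    refine h.congr fun j => ?_
    rw [pow_add]
    field_simp

theorem powerSeries_eq_sum_add_tail {c : ℕ → ℝ} {f : ℝ → ℝ}
    (hf : ∀ x, HasSum (fun j => c j * x ^ j) (f x)) (n : ℕ) (x : ℝ) :
    f x = ∑ j ∈ Finset.range n, c j * x ^ j + (∑' j, c (j + n) * x ^ j) * x ^ n := by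
  rw [← (hf x).tsum_eq, ← (hf x).summable.sum_add_tsum_nat_add n, ← tsum_mul_right]
  simp_rw [pow_add, mul_assoc]

theorem continuousOn_powerSeries {c : ℕ → ℝ} {f : ℝ → ℝ} {a : ℝ}
    (hf : ∀ x, HasSum (fun j => c j * x ^ j) (f x)) : ContinuousOn f (Icc 0 a) := by
  have hcont : ContinuousOn (fun x => ∑' j, c j * x ^ j) (Icc 0 a) := by
    refine continuousOn_tsum (fun j => by fun_prop) (hf a).summable.abs fun j x hx => ?_
    rw [Real.norm_eq_abs, abs_mul, abs_mul, abs_pow, abs_pow, abs_of_nonneg hx.1,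
      abs_of_nonneg (hx.1.trans hx.2)]
    have := pow_le_pow_left₀ hx.1 hx.2 j
    gcongr
  exact hcont.congr fun x _ => (hf x).tsum_eq.symm

theorem hasSum_mul_monomialPrimitive {c : ℕ → ℝ} {f : ℝ → ℝ} {a : ℝ} (ha : 0 < a)
    (hf : ∀ x, HasSum (fun j => c j * x ^ j) (f x)) (n : ℕ) :
    HasSum (fun j => c j * monomialPrimitive n j a)
      (∑ j ∈ Finset.range (n + 1), c j * monomialPrimitive n j a +
        ∫ x in 0..a, ∑' j, c (j + (n + 1)) * x ^ j) := by
  rw [add_comm, ← hasSum_nat_add_iff]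
  have h := hasSum_integral_powerSeries_mul ha.le (hasSum_powerSeries_tail hf (n + 1))
    (continuous_const (y := (1 : ℝ)))
  simp only [mul_one, integral_pow] at h
  refine h.congr_fun fun j => ?_
  have hexp : ((j + (n + 1) : ℕ) : ℤ) - n = ((j + 1 : ℕ) : ℤ) := by omega
  have hcast : ((j + (n + 1) : ℕ) : ℝ) - n = j + 1 := by push_cast; ring
  rw [monomialPrimitive, if_neg (by omega), hexp, hcast, zpow_natCast]
  simp

theorem tendsto_finitePart {c : ℕ → ℝ} {f : ℝ → ℝ} {a : ℝ} (ha : 0 < a)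
    (hf : ∀ x, HasSum (fun j => c j * x ^ j) (f x)) (n : ℕ) :
    Tendsto (fun ε : ℝ => (∫ x in ε..a, f x / x ^ (n + 1)) -
        ((∑ j ∈ Finset.range n, c j / (((n - j : ℕ) : ℝ) * ε ^ (n - j))) - c n * Real.log ε))
      (nhdsWithin 0 (Ioi 0)) (nhds (∑' j, c j * monomialPrimitive n j a)) := by
  set g : ℝ → ℝ := fun x => ∑' j, c (j + (n + 1)) * x ^ j with hg
  have hgc : ContinuousOn g (uIcc 0 a) := by
    rw [uIcc_of_le ha.le]
    exact continuousOn_powerSeries (hasSum_powerSeries_tail hf (n + 1))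
  have hlim : Tendsto (fun ε => ∫ x in ε..a, g x) (nhdsWithin 0 (Ioi 0))
      (nhds (∫ x in 0..a, g x)) := by
    have h := intervalIntegral.continuousOn_primitive_interval_left
      (hgc.integrableOn_compact isCompact_uIcc (μ := volume)) 0 left_mem_uIcc
    rw [uIcc_of_le ha.le] at h
    rw [← nhdsWithin_Ioo_eq_nhdsGT ha]
    exact h.tendsto.mono_left (nhdsWithin_mono _ Ioo_subset_Icc_self)
  rw [(hasSum_mul_monomialPrimitive ha hf n).tsum_eq]
  refine (hlim.const_add _).congr' ?_
  filter_upwards [Ioo_mem_nhdsGT ha] with ε hε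
  have hpos : ∀ x ∈ uIcc ε a, 0 < x := fun x hx => by
    rw [uIcc_of_le hε.2.le] at hx
    exact hε.1.trans_le hx.1
  have hint : ∀ j, IntervalIntegrable (fun x : ℝ => c j * (x ^ j / x ^ (n + 1))) volume ε a := by
    refine fun j => ContinuousOn.intervalIntegrable (continuousOn_const.mul ?_)
    exact ContinuousOn.div (by fun_prop) (by fun_prop) fun x hx => (pow_pos (hpos x hx) _).ne'
  have hgint : IntervalIntegrable g volume ε a := by
    refine (hgc.mono ?_).intervalIntegrable
    exact uIcc_subset_uIcc (by rw [uIcc_of_le ha.le]; exact ⟨hε.1.le, hε.2.le⟩) right_mem_uIcc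
  have hsplit : ∫ x in ε..a, f x / x ^ (n + 1) =
      ∑ j ∈ Finset.range (n + 1), c j * (monomialPrimitive n j a - monomialPrimitive n j ε) +
        ∫ x in ε..a, g x := by
    simp_rw [← integral_pow_div_pow n _ hε.1 hε.2.le, ← intervalIntegral.integral_const_mul]
    have hsum : IntervalIntegrable
        (fun x : ℝ => ∑ j ∈ Finset.range (n + 1), c j * (x ^ j / x ^ (n + 1))) volume ε a := by
      simpa only [Finset.sum_fn] using IntervalIntegrable.sum (Finset.range (n + 1)) fun j _ => hint j
    rw [← intervalIntegral.integral_finsetSum fun j _ => hint j,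
      ← intervalIntegral.integral_add hsum hgint]
    refine intervalIntegral.integral_congr fun x hx => ?_
    have hx0 := (pow_pos (hpos x hx) (n + 1)).ne'
    simp only [powerSeries_eq_sum_add_tail hf (n + 1) x, add_div, Finset.sum_div,
      mul_div_cancel_right₀ _ hx0, mul_div_assoc, hg]
  rw [hsplit, sub_eq_add_neg _ (_ - _), ← sum_mul_monomialPrimitive c n hε.1]
  simp_rw [mul_sub, Finset.sum_sub_distrib]
  ring

theorem integral_pow_add_two_mul_inv (j : ℕ) {ω : ℝ} (hω : 0 < ω) (a : ℝ) :
    ∫ x in 0..a, x ^ (j + 2) * (ω ^ 2 + x ^ 2)⁻¹ =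
      a ^ (j + 1) / (j + 1) - ω ^ 2 * ∫ x in 0..a, x ^ j * (ω ^ 2 + x ^ 2)⁻¹ := by
  have hne : ∀ x : ℝ, ω ^ 2 + x ^ 2 ≠ 0 := fun x => by positivity
  have hint : IntervalIntegrable (fun x : ℝ => x ^ j * (ω ^ 2 + x ^ 2)⁻¹) volume 0 a :=
    Continuous.intervalIntegrable (by fun_prop (disch := exact hne _)) _ _
  have hpow : ∫ x in 0..a, x ^ j = a ^ (j + 1) / (j + 1) := by simp [integral_pow]
  rw [← hpow, ← intervalIntegral.integral_const_mul, ← intervalIntegral.integral_sub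
    (Continuous.intervalIntegrable (by fun_prop) _ _) (hint.const_mul _)]
  refine intervalIntegral.integral_congr fun x _ => ?_
  have := hne x
  field_simp
  ring

theorem integral_mul_inv_sq_add_sq {ω : ℝ} (hω : 0 < ω) (a : ℝ) :
    ∫ x in 0..a, x * (ω ^ 2 + x ^ 2)⁻¹ = (Real.log (ω ^ 2 + a ^ 2) - Real.log (ω ^ 2)) / 2 := by
  have hne : ∀ x : ℝ, ω ^ 2 + x ^ 2 ≠ 0 := fun x => by positivity
  rw [intervalIntegral.integral_eq_sub_of_hasDerivAt
    (f := fun x => Real.log (ω ^ 2 + x ^ 2) / 2) (fun x _ => ?_)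
    (Continuous.intervalIntegrable (by fun_prop (disch := exact hne _)) _ _)]
  · simp [sub_div]
  · refine ((((hasDerivAt_pow 2 x).const_add (ω ^ 2)).log (hne x)).div_const 2).congr_deriv ?_
    have := hne x
    field_simp
    norm_num
    ring

theorem hasSum_monomial_stieltjes {ω a : ℝ} (hω : 0 < ω) (ha : ω < a) (j : ℕ) :
    HasSum (fun k : ℕ => (-1 : ℝ) ^ k * ω ^ (2 * k) * monomialPrimitive (2 * k + 1) j a)
      ((∫ x in 0..a, x ^ j * (ω ^ 2 + x ^ 2)⁻¹) -
        (Real.pi / (2 * ω) * (((ω : ℂ) * Complex.I) ^ j).re -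
          Real.log ω / ω * (((ω : ℂ) * Complex.I) ^ j).im)) := by
  have ha0 : 0 < a := hω.trans ha
  have hlt : ω / a < 1 := (div_lt_one ha0).mpr ha
  have hpos : 0 < ω / a := by positivity
  induction j using Nat.twoStepInduction with
  | zero =>
    have h := (Real.hasSum_arctan (x := ω / a)
      (by rwa [Real.norm_eq_abs, abs_of_pos hpos])).mul_left (-ω⁻¹)
    convert h using 1
    · rfl
    · funext k
      have : -(2 * (k : ℝ) + 1) ≠ 0 := by
        have : (0 : ℝ) ≤ k := k.cast_nonneg
        linarith
      rw [monomialPrimitive, if_neg (by omega),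
        show ((0 : ℕ) : ℤ) - (2 * k + 1 : ℕ) = -((2 * k + 1 : ℕ) : ℤ) by omega, zpow_neg,
        zpow_natCast]
      push_cast
      rw [zero_sub, div_pow]
      field_simp
      ring
    · simp only [pow_zero, one_mul, integral_inv_sq_add_sq hω.ne', zero_div, Real.arctan_zero,
        Complex.one_re, Complex.one_im]
      rw [← inv_div ω a, Real.arctan_inv_of_pos hpos]
      field_simp
      ring
  | one =>
    have hx : |-(ω / a) ^ 2| < 1 := by
      rw [abs_neg, abs_of_pos (by positivity)]
      exact pow_lt_one₀ hpos.le hlt two_ne_zero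
    have h := (Real.hasSum_pow_div_log_of_abs_lt_one hx).mul_left (-2⁻¹)
    rw [← hasSum_nat_add_iff' 1]
    convert h using 1
    · rfl
    · funext k
      have : (k : ℝ) + 1 ≠ 0 := by positivity
      rw [monomialPrimitive, if_neg (by omega),
        show ((1 : ℕ) : ℤ) - (2 * (k + 1) + 1 : ℕ) = -((2 * (k + 1) : ℕ) : ℤ) by omega, zpow_neg,
        zpow_natCast, neg_pow ((ω / a) ^ 2), ← pow_mul, div_pow]
      have h2 : ((1 : ℕ) : ℝ) - (2 * (k + 1) + 1 : ℕ) = -(2 * (k + 1)) := by push_cast; ring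
      rw [h2]
      field_simp
    · simp only [pow_one, integral_mul_inv_sq_add_sq hω]
      have hlog : Real.log (1 - -(ω / a) ^ 2) = Real.log (ω ^ 2 + a ^ 2) - 2 * Real.log a := by
        rw [show 1 - -(ω / a) ^ 2 = (ω ^ 2 + a ^ 2) / a ^ 2 by field_simp; ring,
          Real.log_div (by positivity) (by positivity), Real.log_pow]
        norm_num
      rw [hlog]
      simp [monomialPrimitive]
      field_simp
      ring
  | more j ih _ =>
    rw [← hasSum_nat_add_iff' 1]
    convert ih.mul_left (-ω ^ 2) using 1
    · rfl
    · funext k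
      have h : monomialPrimitive (2 * (k + 1) + 1) (j + 2) a = monomialPrimitive (2 * k + 1) j a := by
        unfold monomialPrimitive
        have h1 : j + 2 = 2 * (k + 1) + 1 ↔ j = 2 * k + 1 := by omega
        simp only [h1]
        split_ifs with hj
        · rfl
        · congr 1
          · congr 1
            push_cast
            ring
          · push_cast
            ring
      rw [h]
      ring
    · have h0 : monomialPrimitive 1 (j + 2) a = a ^ (j + 1) / (j + 1) := by
        rw [monomialPrimitive, if_neg (by omega),
          show ((j + 2 : ℕ) : ℤ) - (1 : ℕ) = ((j + 1 : ℕ) : ℤ) by omega, zpow_natCast]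
        congr 1
        push_cast
        ring
      have hsq : ((ω : ℂ) * Complex.I) ^ (j + 2) = ((-ω ^ 2 : ℝ) : ℂ) * ((ω : ℂ) * Complex.I) ^ j := by
        rw [pow_add, mul_pow _ _ 2, Complex.I_sq]
        push_cast
        ring
      rw [integral_pow_add_two_mul_inv j hω, hsq, Complex.re_ofReal_mul, Complex.im_ofReal_mul]
      simp [h0]
      ring

theorem summable_mul_monomialPrimitive {c : ℕ → ℝ} {ω a : ℝ} (hω : 0 < ω) (ha : ω < a)
    (hc : Summable fun j => c j * a ^ j) :
    Summable fun p : ℕ × ℕ =>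
      c p.2 * ((-1 : ℝ) ^ p.1 * ω ^ (2 * p.1) * monomialPrimitive (2 * p.1 + 1) p.2 a) := by
  have ha0 : 0 < a := hω.trans ha
  have hgeo : Summable fun k : ℕ => ((ω / a) ^ 2) ^ k :=
    summable_geometric_of_lt_one (by positivity)
      (pow_lt_one₀ (by positivity) ((div_lt_one ha0).mpr ha) two_ne_zero)
  have hprod := (hgeo.mul_of_nonneg hc.abs (fun k => by positivity) fun j => abs_nonneg _).mul_left
    ((1 + |Real.log a|) / a)
  refine Summable.of_norm_bounded hprod ?_
  rintro ⟨k, j⟩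
  have h := abs_monomialPrimitive_le (2 * k + 1) j ha0
  simp only [Real.norm_eq_abs, abs_mul, abs_pow, abs_neg, abs_one, one_pow, one_mul,
    abs_of_pos hω, abs_of_pos ha0]
  calc |c j| * (ω ^ (2 * k) * |monomialPrimitive (2 * k + 1) j a|)
      ≤ |c j| * (ω ^ (2 * k) * ((1 + |Real.log a|) * (a ^ j / a ^ (2 * k + 1)))) := by gcongr
    _ = _ := by
      rw [← pow_mul, div_pow, pow_succ a (2 * k)]
      field_simp

open Filter MeasureTheory Set

/-- Finite-part integration of `∫_0^a f(x)/(ω²+x²) dx` for an entire `F` real on the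
real axis: it equals `Σ_k (-1)^k ω^{2k} ⨍_0^a f/x^{2k+2} + (π/2ω) Re F(iω)
− (ln ω/ω) Im F(iω)`, the series converging. -/
theorem stmt_12 (F : ℂ → ℂ) (hF : Differentiable ℂ F)
    (hreal : ∀ x : ℝ, (F x).im = 0)
    (f : ℝ → ℝ) (hf : ∀ x : ℝ, f x = (F x).re)
    (c : ℕ → ℝ) (hc : ∀ j, (c j : ℂ) = iteratedDeriv j F 0 / (Nat.factorial j))
    (ω a : ℝ) (hω : 0 < ω) (ha : ω < a) :
    ∃ fp : ℕ → ℝ, ∃ S : ℝ,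
      (∀ k : ℕ,
        Tendsto
          (fun ε : ℝ =>
            (∫ x in ε..a, f x / x ^ (2 * k + 2)) -
              ((∑ j ∈ Finset.range (2 * k + 1),
                  c j / (((2 * k + 1 - j : ℕ) : ℝ) * ε ^ (2 * k + 1 - j))) -
                c (2 * k + 1) * Real.log ε))
          (nhdsWithin 0 (Set.Ioi 0)) (nhds (fp k))) ∧
      HasSum (fun k : ℕ => (-1 : ℝ) ^ k * ω ^ (2 * k) * fp k) S ∧
      (∫ x in (0 : ℝ)..a, f x / (ω ^ 2 + x ^ 2)) =
        S + (Real.pi / (2 * ω)) * (F ((ω : ℂ) * Complex.I)).re -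
          (Real.log ω / ω) * (F ((ω : ℂ) * Complex.I)).im := by
  have ha0 : 0 < a := hω.trans ha
  have hFsum : ∀ z : ℂ, HasSum (fun j => (c j : ℂ) * z ^ j) (F z) := fun z => by
    refine (Complex.hasSum_taylorSeries_of_entire hF 0 z).congr_fun fun j => ?_
    rw [hc, sub_zero, smul_eq_mul, smul_eq_mul]
    ring
  have hfsum : ∀ x : ℝ, HasSum (fun j => c j * x ^ j) (f x) := fun x => by
    rw [hf]
    simpa [← Complex.ofReal_pow, ← Complex.ofReal_mul] using Complex.hasSum_re (hFsum x)
  have hu := summable_mul_monomialPrimitive hω ha (hfsum a).summable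
  have hrow : ∀ k : ℕ, HasSum (fun j => c j * ((-1 : ℝ) ^ k * ω ^ (2 * k) *
      monomialPrimitive (2 * k + 1) j a))
      ((-1 : ℝ) ^ k * ω ^ (2 * k) * ∑' j, c j * monomialPrimitive (2 * k + 1) j a) := fun k => by
    have h := (hasSum_mul_monomialPrimitive ha0 hfsum (2 * k + 1)).summable.hasSum.mul_left
      ((-1 : ℝ) ^ k * ω ^ (2 * k))
    simpa only [mul_left_comm] using h
  have hcol := ((Equiv.prodComm ℕ ℕ).hasSum_iff.mpr hu.hasSum).prod_fiberwise fun j =>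
    (hasSum_monomial_stieltjes hω ha j).mul_left (c j)
  refine ⟨fun k => ∑' j, c j * monomialPrimitive (2 * k + 1) j a, _,
    fun k => tendsto_finitePart ha0 hfsum (2 * k + 1), hu.hasSum.prod_fiberwise hrow, ?_⟩
  have hint := hasSum_integral_powerSeries_mul ha0.le hfsum (w := fun x => (ω ^ 2 + x ^ 2)⁻¹)
    (by fun_prop (disch := intro x; positivity))
  have hz := hFsum ((ω : ℂ) * Complex.I)
  have hre := (Complex.hasSum_re hz).mul_left (Real.pi / (2 * ω))
  have him := (Complex.hasSum_im hz).mul_left (Real.log ω / ω)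
  have hkey := hcol.unique ((hint.sub (hre.sub him)).congr_fun fun j => ?_)
  · simp only [div_eq_mul_inv (f _)]
    rw [hkey]
    ring
  · simp only [Complex.re_ofReal_mul, Complex.im_ofReal_mul]
    ring
end
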